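/- Let k be a commutative unital ring, n a natural number, and ε ∈ k invertible. Then there is an isomorphism of graded k-modules Tor_*^{BR_n(ε)}(𝟙,𝟙) ≅ Tor_*^{k[B_n]}(k,k) = H_*(B_n; k), where B_n is the braid group on n strands and k[B_n] its group algebra with k carrying the trivial B_n-action. -/

import Mathlib

open scoped TensorProduct

noncomputable section

/-! ### Bar-complex homology of an augmented algebra

For a `k`-algebra `A` with augmentation `ε : A →ₐ[k] k` (the algebra map corresponding to
the trivial module `𝟙 = k`), we form the (unnormalized) bar complex `C_q = A^{⊗ q}`
(tensors over `k`), with the usual differential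
`d(a₁⊗…⊗a_q) = ε(a₁)(a₂⊗…) + Σ (-1)^i (…a_i a_{i+1}…) + (-1)^q ε(a_q)(a₁⊗…)`,
whose homology is `Tor_*^A(𝟙,𝟙)`. -/

/-- The modules `A^{⊗ q}` of the bar complex. -/
def barC (k : Type) [CommRing k] (A : Type) [Ring A] [Algebra k A] : ℕ → ModuleCat k
  | 0 => ModuleCat.of k k
  | (q + 1) => ModuleCat.of k (A ⊗[k] (barC k A q))

variable (k : Type) [CommRing k] (A : Type) [Ring A] [Algebra k A] (ε : A →ₐ[k] k)

/-- Left multiplication of `A` on the leftmost bar factor (via `ε` in degree `0`). -/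
def barAct : ∀ q : ℕ, A →ₗ[k] ((barC k A q : Type) →ₗ[k] (barC k A q : Type))
  | 0 => (LinearMap.lsmul k k).comp ε.toLinearMap
  | (q + 1) =>
    show A →ₗ[k] ((A ⊗[k] (barC k A q : Type)) →ₗ[k] (A ⊗[k] (barC k A q : Type))) from
    { toFun := fun a => TensorProduct.map (LinearMap.mulLeft k a) LinearMap.id
      map_add' := by
        intro a b
        refine TensorProduct.ext' fun x y => ?_
        simp [add_mul, TensorProduct.add_tmul]
      map_smul' := by
        intro c a
        refine TensorProduct.ext' fun x y => ?_
        simp [TensorProduct.smul_tmul', smul_mul_assoc] }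

/-- All terms of the bar differential except the first face. -/
def barB : ∀ q : ℕ, ((A ⊗[k] (barC k A q : Type)) →ₗ[k] (barC k A q : Type))
  | 0 => - TensorProduct.lift ((LinearMap.lsmul k (barC k A 0 : Type)).comp ε.toLinearMap)
  | (q + 1) =>
    show (A ⊗[k] (A ⊗[k] (barC k A q : Type))) →ₗ[k] (A ⊗[k] (barC k A q : Type)) from
    TensorProduct.lift (LinearMap.mk₂ k
      (fun (a : A) (x : A ⊗[k] (barC k A q : Type)) =>
        -((show A →ₗ[k] ((A ⊗[k] (barC k A q : Type)) →ₗ[k] (A ⊗[k] (barC k A q : Type))) from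
            barAct k A ε (q + 1)) a x) - a ⊗ₜ[k] (barB q x))
      (by intro a b x
          have h : ∀ f : A →ₗ[k] ((A ⊗[k] (barC k A q : Type)) →ₗ[k] (A ⊗[k] (barC k A q : Type))),
              -(f (a + b) x) - (a + b) ⊗ₜ[k] (barB q x)
                = (-(f a x) - a ⊗ₜ[k] (barB q x)) + (-(f b x) - b ⊗ₜ[k] (barB q x)) := by
            intro f
            simp only [map_add, LinearMap.add_apply, TensorProduct.add_tmul]
            try abel
          exact h (barAct k A ε (q + 1)))
      (by intro c a x
          have h : ∀ f : A →ₗ[k] ((A ⊗[k] (barC k A q : Type)) →ₗ[k] (A ⊗[k] (barC k A q : Type))),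
              -(f (c • a) x) - (c • a) ⊗ₜ[k] (barB q x)
                = c • (-(f a x) - a ⊗ₜ[k] (barB q x)) := by
            intro f
            simp only [map_smul, LinearMap.smul_apply, smul_sub, smul_neg,
              TensorProduct.smul_tmul']
          exact h (barAct k A ε (q + 1)))
      (by intro a x y
          simp only [map_add, LinearMap.map_add, TensorProduct.tmul_add]
          try abel)
      (by intro c a x
          simp only [map_smul, LinearMap.map_smul, TensorProduct.tmul_smul, smul_sub, smul_neg]
          try abel))

/-- The bar differential `C_{q+1} = A ⊗ C_q → C_q`. -/
def bard (q : ℕ) : (A ⊗[k] (barC k A q : Type)) →ₗ[k] (barC k A q : Type) :=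
  TensorProduct.lift ((LinearMap.lsmul k (barC k A q : Type)).comp ε.toLinearMap)
  + barB k A ε q

/-- Cycles of the bar complex. -/
def barCycles : ∀ q : ℕ, Submodule k (barC k A q : Type)
  | 0 => ⊤
  | (q + 1) =>
    show Submodule k (barC k A (q + 1) : Type) from LinearMap.ker (bard k A ε q)

/-- `Tor_q^A(𝟙, 𝟙)`, the homology of the algebra `A` with augmentation (trivial module) `ε`,
computed by the bar complex. -/
def barTor (q : ℕ) : Type :=
  (barCycles k A ε q) ⧸
    (Submodule.comap (barCycles k A ε q).subtype (LinearMap.range (bard k A ε q)))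

instance (q : ℕ) : AddCommGroup (barTor k A ε q) :=
  inferInstanceAs (AddCommGroup ((barCycles k A ε q) ⧸
    (Submodule.comap (barCycles k A ε q).subtype (LinearMap.range (bard k A ε q)))))

instance (q : ℕ) : Module k (barTor k A ε q) :=
  inferInstanceAs (Module k ((barCycles k A ε q) ⧸
    (Submodule.comap (barCycles k A ε q).subtype (LinearMap.range (bard k A ε q)))))

/-- The augmentation of a group algebra `k[G]`, corresponding to the trivial action of `G`
on `k`. -/
def groupAug (G : Type) [Group G] : MonoidAlgebra k G →ₐ[k] k :=
  MonoidAlgebra.lift k k G 1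

/-- Group homology `H_*(G; k) = Tor_*^{k[G]}(k, k)` (with the trivial action on `k`). -/
abbrev groupTor (G : Type) [Group G] (q : ℕ) : Type :=
  barTor k (MonoidAlgebra k G) (groupAug k G) q

section Groups

/-- The action of the symmetric group on `G^n` by permuting the factors. -/
def permMulAut (G : Type) [Group G] (n : ℕ) :
    Equiv.Perm (Fin n) →* MulAut (Fin n → G) where
  toFun σ :=
    { toFun := fun f => f ∘ σ.symm
      invFun := fun f => f ∘ σ
      left_inv := fun f => by funext i; simp
      right_inv := fun f => by funext i; simp
      map_mul' := fun f g => rfl }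
  map_one' := by ext f i; rfl
  map_mul' := fun σ τ => by ext f i; rfl

/-- The Artin braid relations, on `m` generators (so for the braid group on `m+1` strands). -/
def braidRels (m : ℕ) : Set (FreeGroup (Fin m)) :=
  { x | ∃ i j : Fin m,
      ((i : ℕ) + 1 = (j : ℕ) ∧
        x = .of i * .of j * .of i * (.of j * .of i * .of j)⁻¹) ∨
      ((i : ℕ) + 1 < (j : ℕ) ∧
        x = .of i * .of j * (.of j * .of i)⁻¹) }

/-- The braid group `B_n` on `n` strands, presented by the Artin generators
`σ_1, …, σ_{n-1}` and the braid relations. -/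
abbrev BraidGroup (n : ℕ) : Type := PresentedGroup (braidRels (n - 1))

private lemma swap_braid {α : Type} [DecidableEq α] (a b c : α)
    (hab : a ≠ b) (hac : a ≠ c) (hbc : b ≠ c) :
    Equiv.swap a b * Equiv.swap b c * Equiv.swap a b
      = Equiv.swap b c * Equiv.swap a b * Equiv.swap b c := by
  have h1 : Equiv.swap b c * Equiv.swap a b * Equiv.swap b c = Equiv.swap c a :=
    Equiv.swap_mul_swap_mul_swap hab hac
  have h2 : Equiv.swap b a * Equiv.swap c b * Equiv.swap b a = Equiv.swap a c :=
    Equiv.swap_mul_swap_mul_swap hbc.symm hac.symm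
  rw [Equiv.swap_comm b a, Equiv.swap_comm c b] at h2
  rw [h1, h2, Equiv.swap_comm]

private lemma swap_swap_comm {α : Type} [DecidableEq α] (a b c d : α)
    (hac : a ≠ c) (had : a ≠ d) (hbc : b ≠ c) (hbd : b ≠ d) :
    Equiv.swap a b * Equiv.swap c d = Equiv.swap c d * Equiv.swap a b := by
  have h := Equiv.swap_apply_apply (Equiv.swap c d) a b
  rw [Equiv.swap_apply_of_ne_of_ne hac had, Equiv.swap_apply_of_ne_of_ne hbc hbd] at h
  exact eq_mul_inv_iff_mul_eq.mp h

/-- The transpositions which are the images of the braid generators. -/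
def braidGen (n : ℕ) (i : Fin (n - 1)) : Equiv.Perm (Fin n) :=
  Equiv.swap ⟨(i : ℕ), by have := i.2; omega⟩ ⟨(i : ℕ) + 1, by have := i.2; omega⟩

private lemma braidGen_braid (n : ℕ) (i j : Fin (n - 1)) (hij : (i : ℕ) + 1 = (j : ℕ)) :
    braidGen n i * braidGen n j * braidGen n i
      = braidGen n j * braidGen n i * braidGen n j := by
  obtain ⟨i, hi⟩ := i
  obtain ⟨j, hj⟩ := j
  simp only at hij
  subst hij
  unfold braidGen
  exact swap_braid _ _ _ (by simp only [ne_eq, Fin.mk.injEq]; omega)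
    (by simp only [ne_eq, Fin.mk.injEq]; omega) (by simp only [ne_eq, Fin.mk.injEq]; omega)

private lemma braidGen_comm (n : ℕ) (i j : Fin (n - 1)) (hij : (i : ℕ) + 1 < (j : ℕ)) :
    braidGen n i * braidGen n j = braidGen n j * braidGen n i := by
  unfold braidGen
  exact swap_swap_comm _ _ _ _ (by simp only [ne_eq, Fin.mk.injEq]; omega)
    (by simp only [ne_eq, Fin.mk.injEq]; omega) (by simp only [ne_eq, Fin.mk.injEq]; omega)
    (by simp only [ne_eq, Fin.mk.injEq]; omega)

/-- The canonical projection from the braid group to the symmetric group. -/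
def braidToPerm (n : ℕ) : BraidGroup n →* Equiv.Perm (Fin n) :=
  PresentedGroup.toGroup (f := braidGen n) (by
    rintro r ⟨i, j, (⟨hij, rfl⟩ | ⟨hij, rfl⟩)⟩ <;>
      simp only [map_mul, map_inv, FreeGroup.lift_apply_of] <;> rw [mul_inv_eq_one]
    · exact braidGen_braid n i j hij
    · exact braidGen_comm n i j hij)

end Groups

section BRsection

/-! The braided rook algebra `BR_n(ε)`: generators `b i`/`bi i` (positive/negative
crossings of strands `i, i+1`) and `p j` (the identity diagram with strand `j` deleted);
an isolated middle vertex arising in a composition is a contractible component and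
contributes the factor `ε`. -/

inductive BRGen (n : ℕ) : Type
  | b : Fin (n - 1) → BRGen n
  | bi : Fin (n - 1) → BRGen n
  | p : Fin n → BRGen n

variable (k : Type) [CommRing k] (n : ℕ) (ε : k)

abbrev BRb (i : Fin (n - 1)) : FreeAlgebra k (BRGen n) := FreeAlgebra.ι k (BRGen.b i)
abbrev BRbi (i : Fin (n - 1)) : FreeAlgebra k (BRGen n) := FreeAlgebra.ι k (BRGen.bi i)
abbrev BRp (j : Fin n) : FreeAlgebra k (BRGen n) := FreeAlgebra.ι k (BRGen.p j)

/-- The diagrammatic relations. -/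
inductive BRRel : FreeAlgebra k (BRGen n) → FreeAlgebra k (BRGen n) → Prop
  | b_inv_r (i : Fin (n - 1)) :
      BRRel (BRb k n i * BRbi k n i) (1)
  | b_inv_l (i : Fin (n - 1)) :
      BRRel (BRbi k n i * BRb k n i) (1)
  | b_braid (i j : Fin (n - 1)) (h : (j : ℕ) = (i : ℕ) + 1) :
      BRRel (BRb k n i * BRb k n j * BRb k n i) (BRb k n j * BRb k n i * BRb k n j)
  | bb_comm (i j : Fin (n - 1)) (h : (i : ℕ) + 1 < (j : ℕ)) :
      BRRel (BRb k n i * BRb k n j) (BRb k n j * BRb k n i)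
  | p_sq (j : Fin n) :
      BRRel (BRp k n j * BRp k n j) (ε • BRp k n j)
  | pp_comm (j l : Fin n) (h : (j : ℕ) < (l : ℕ)) :
      BRRel (BRp k n j * BRp k n l) (BRp k n l * BRp k n j)
  | bp_comm (i : Fin (n - 1)) (l : Fin n) (h : (l : ℕ) ≠ (i : ℕ) ∧ (l : ℕ) ≠ (i : ℕ) + 1) :
      BRRel (BRb k n i * BRp k n l) (BRp k n l * BRb k n i)
  | bp_slide (i : Fin (n - 1)) (j j' : Fin n) (h : (j : ℕ) = (i : ℕ)) (h' : (j' : ℕ) = (i : ℕ) + 1) :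
      BRRel (BRb k n i * BRp k n j) (BRp k n j' * BRb k n i)
  | bp_slide' (i : Fin (n - 1)) (j j' : Fin n) (h : (j : ℕ) = (i : ℕ)) (h' : (j' : ℕ) = (i : ℕ) + 1) :
      BRRel (BRb k n i * BRp k n j') (BRp k n j * BRb k n i)
  | pbp (i : Fin (n - 1)) (j j' : Fin n) (h : (j : ℕ) = (i : ℕ)) (h' : (j' : ℕ) = (i : ℕ) + 1) :
      BRRel (BRp k n j * BRb k n i * BRp k n j) (BRp k n j * BRp k n j')
  | pbb (i : Fin (n - 1)) (j : Fin n) (h : (j : ℕ) = (i : ℕ)) :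
      BRRel (BRp k n j * BRb k n i * BRb k n i) (BRp k n j)
  | pbb' (i : Fin (n - 1)) (j' : Fin n) (h' : (j' : ℕ) = (i : ℕ) + 1) :
      BRRel (BRp k n j' * BRb k n i * BRb k n i) (BRp k n j')

/-- The diagram algebra: the quotient of the free algebra on the diagram generators by
the diagrammatic relations. -/
abbrev BRAlg : Type := RingQuot (BRRel k n ε)

/-- The augmentation corresponding to the trivial module `𝟙`: a diagram acts by `1`
if it has `n` left-to-right connections, and by `0` otherwise. -/
noncomputable def BRaug : BRAlg k n ε →ₐ[k] k :=
  RingQuot.liftAlgHom k ⟨FreeAlgebra.lift k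
      (fun x => match x with
        | BRGen.b _ => (1 : k)
        | BRGen.bi _ => (1 : k)
        | BRGen.p _ => (0 : k)),
    by rintro x y h
       induction h <;>
         simp [BRb, BRbi, BRp, FreeAlgebra.lift_ι_apply]⟩

end BRsection

section Helpers

/-- Functoriality of the bar modules. -/
def barMap {k : Type} [CommRing k] {A B : Type} [Ring A] [Algebra k A] [Ring B] [Algebra k B]
    (φ : A →ₗ[k] B) : ∀ q : ℕ, (barC k A q : Type) →ₗ[k] (barC k B q : Type)
  | 0 => (LinearMap.id : k →ₗ[k] k)
  | (q + 1) =>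
    show (A ⊗[k] (barC k A q : Type)) →ₗ[k] (B ⊗[k] (barC k B q : Type)) from
      TensorProduct.map φ (barMap φ q)

/-- Prepending a bar entry. -/
def bt {k : Type} [CommRing k] {A : Type} [Ring A] [Algebra k A] {q : ℕ} (a : A)
    (x : (barC k A q : Type)) : (barC k A (q + 1) : Type) :=
  show A ⊗[k] (barC k A q : Type) from a ⊗ₜ[k] x

variable {k : Type} [CommRing k] {A : Type} [Ring A] [Algebra k A] (ε : A →ₐ[k] k)

/-- `bt` as a linear map. -/
def btL {q : ℕ} (a : A) : (barC k A q : Type) →ₗ[k] (barC k A (q + 1) : Type) :=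
  TensorProduct.mk k A (barC k A q : Type) a

/-- `TensorProduct.map` on bar modules. -/
def btM {q r : ℕ} (g : A →ₗ[k] A) (h : (barC k A q : Type) →ₗ[k] (barC k A r : Type)) :
    (barC k A (q + 1) : Type) →ₗ[k] (barC k A (r + 1) : Type) :=
  TensorProduct.map g h

lemma bt_add {q : ℕ} (a : A) (x y : (barC k A q : Type)) : bt a (x + y) = bt a x + bt a y :=
  TensorProduct.tmul_add _ _ _
lemma bt_sub {q : ℕ} (a : A) (x y : (barC k A q : Type)) : bt a (x - y) = bt a x - bt a y :=
  TensorProduct.tmul_sub _ _ _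
lemma bt_neg {q : ℕ} (a : A) (x : (barC k A q : Type)) : bt a (-x) = - bt a x :=
  TensorProduct.tmul_neg _ _
lemma bt_smul {q : ℕ} (c : k) (a : A) (x : (barC k A q : Type)) : bt a (c • x) = c • bt a x :=
  TensorProduct.tmul_smul _ _ _

/-- The tail of the differential, as a map out of `C_{q+1}`. -/
def bB (q : ℕ) : (barC k A (q + 1) : Type) →ₗ[k] (barC k A q : Type) := barB k A ε q
/-- The differential, as a map out of `C_{q+1}`. -/
def bD (q : ℕ) : (barC k A (q + 1) : Type) →ₗ[k] (barC k A q : Type) := bard k A ε q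

lemma bC_ext {q : ℕ} {M : Type} [AddCommGroup M] [Module k M]
    {f g : (barC k A (q + 1) : Type) →ₗ[k] M} (h : ∀ a x, f (bt a x) = g (bt a x)) : f = g :=
  TensorProduct.ext' (R := k) (M := A) (N := (barC k A q : Type)) h

lemma barAct_succ {q : ℕ} (a c : A) (x : (barC k A q : Type)) :
    barAct k A ε (q + 1) a (bt c x) = bt (a * c) x := rfl

lemma barAct_zero (a : A) (x : (barC k A 0 : Type)) :
    barAct k A ε 0 a x = ε a • x := rfl

lemma bB_zero (a : A) (x : (barC k A 0 : Type)) : bB ε 0 (bt a x) = - (ε a • x) := rfl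

lemma bB_succ {q : ℕ} (a : A) (x : (barC k A (q + 1) : Type)) :
    bB ε (q + 1) (bt a x) = - barAct k A ε (q + 1) a x - bt a (bB ε q x) := rfl

lemma bD_apply {q : ℕ} (a : A) (x : (barC k A q : Type)) :
    bD ε q (bt a x) = ε a • x + bB ε q (bt a x) := rfl

section maps
variable {B : Type} [Ring B] [Algebra k B] (η : B →ₐ[k] k) (φ : A →ₗ[k] B)

lemma barMap_bt {q : ℕ} (a : A) (x : (barC k A q : Type)) :
    barMap φ (q + 1) (bt a x) = bt (φ a) (barMap φ q x) := rfl

variable (hm : ∀ a b, φ (a * b) = φ a * φ b) (he : ∀ a, η (φ a) = ε a)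

lemma barMap_act (hm : ∀ a b, φ (a * b) = φ a * φ b) (q : ℕ) (a : A)
    (x : (barC k A (q + 1) : Type)) :
    barMap φ (q + 1) (barAct k A ε (q + 1) a x)
      = barAct k B η (q + 1) (φ a) (barMap φ (q + 1) x) := by
  have : (barMap φ (q + 1)).comp (barAct k A ε (q + 1) a)
      = (barAct k B η (q + 1) (φ a)).comp (barMap φ (q + 1)) := by
    apply bC_ext
    intro c y
    simp only [LinearMap.comp_apply, barAct_succ, barMap_bt, hm]
  exact LinearMap.congr_fun this x

lemma barMap_B (hm : ∀ a b, φ (a * b) = φ a * φ b) (he : ∀ a, η (φ a) = ε a)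
    (q : ℕ) (x : (barC k A (q + 1) : Type)) :
    barMap φ q (bB ε q x) = bB η q (barMap φ (q + 1) x) := by
  induction q with
  | zero =>
    have : (barMap φ 0).comp (bB ε 0) = (bB η 0).comp (barMap φ 1) := by
      apply bC_ext
      intro c y
      simp only [LinearMap.comp_apply, bB_zero, barMap_bt, he, map_neg, map_smul]
    exact LinearMap.congr_fun this x
  | succ q ih =>
    have : (barMap φ (q + 1)).comp (bB ε (q + 1)) = (bB η (q + 1)).comp (barMap φ (q + 2)) := by
      apply bC_ext
      intro c y
      simp only [LinearMap.comp_apply, bB_succ, barMap_bt, map_neg, map_sub, ih,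
        barMap_act ε η φ hm]
    exact LinearMap.congr_fun this x

lemma barMap_D (hm : ∀ a b, φ (a * b) = φ a * φ b) (he : ∀ a, η (φ a) = ε a)
    (q : ℕ) (x : (barC k A (q + 1) : Type)) :
    barMap φ q (bD ε q x) = bD η q (barMap φ (q + 1) x) := by
  have : (barMap φ q).comp (bD ε q) = (bD η q).comp (barMap φ (q + 1)) := by
    apply bC_ext
    intro c y
    simp only [LinearMap.comp_apply, bD_apply, map_add, map_smul, barMap_B ε η φ hm he,
      barMap_bt, he]
  exact LinearMap.congr_fun this x

/-- Induced map on cycles. -/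
def cycMap (q : ℕ) : barCycles k A ε q →ₗ[k] barCycles k B η q :=
  (barMap φ q).restrict (by
    cases q with
    | zero => intro x _; exact Submodule.mem_top
    | succ q =>
      intro x hx
      change bD ε q x = 0 at hx
      change bD η q _ = 0
      rw [← barMap_D ε η φ hm he, hx, map_zero])

/-- Induced map on homology. -/
def torMap (q : ℕ) : barTor k A ε q →ₗ[k] barTor k B η q :=
  Submodule.mapQ _ _ (cycMap ε η φ hm he q) (by
    rintro ⟨x, hx⟩ ⟨y, hy⟩
    refine ⟨barMap φ (q + 1) y, ?_⟩
    have := barMap_D ε η φ hm he q y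
    change bD ε q y = x at hy
    change bD η q _ = barMap φ q x
    rw [← this, hy])

end maps

section homotopy

/-- The contracting homotopy. -/
def barH (f : A) : ∀ q : ℕ, (barC k A q : Type) →ₗ[k] (barC k A (q + 1) : Type)
  | 0 => show (barC k A 0 : Type) →ₗ[k] (A ⊗[k] (barC k A 0 : Type)) from
      TensorProduct.mk k A (barC k A 0 : Type) f
  | (q + 1) =>
    btL (k := k) (q := q + 1) f - btM (k := k) (LinearMap.mulLeft k f) (barH f q)

lemma barH_zero (f : A) (x : (barC k A 0 : Type)) : barH f 0 x = bt f x := rfl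
lemma barH_succ (f : A) (q : ℕ) (a : A) (x : (barC k A q : Type)) :
    barH f (q + 1) (bt a x) = bt f (bt a x) - bt (f * a) (barH f q x) := rfl

variable (f : A)

lemma barH_B (hf : f * f = f) (hc : ∀ a, a * f = f * a) (hε : ε f = 1)
    (q : ℕ) (y : (barC k A (q + 1) : Type)) : ∀ (a : A) (x : (barC k A q : Type)),
    y = bt a x →
    barH f q (bB ε q y) = bt (f * a) x + bt f (bB ε q y)
      - barAct k A ε (q + 1) (f * a) (barH f q x) - bt (f * a) (bB ε q (barH f q x))
      - bt (f * a) (barMap (LinearMap.mulLeft k f) q x) := by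
  induction q with
  | zero =>
    rintro a x rfl
    have h1 : f * a * f = f * a := by rw [mul_assoc, hc, ← mul_assoc, hf]
    have h2 : barMap (LinearMap.mulLeft k f) 0 x = x := rfl
    simp only [bB_zero, barH_zero, barAct_succ, h1, h2, hε, one_smul, bt_neg, map_neg, map_smul]
    simp only [bt_smul]
    abel
  | succ q ih =>
    intro a x hy
    subst hy
    have key : (barH f (q + 1)).comp ((bB ε (q + 1)).comp
          (btL a)) =
        (btL (f * a))
        + (btL f).comp ((bB ε (q + 1)).comp
          (btL a))
        - (barAct k A ε (q + 2) (f * a)).comp (barH f (q + 1))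
        - (btL (f * a)).comp
            ((bB ε (q + 1)).comp (barH f (q + 1)))
        - (btL (f * a)).comp
            (barMap (LinearMap.mulLeft k f) (q + 1)) := by
      apply bC_ext
      intro c z
      change barH f (q + 1) (bB ε (q + 1) (bt a (bt c z))) = bt (f * a) (bt c z)
        + bt f (bB ε (q + 1) (bt a (bt c z)))
        - barAct k A ε (q + 2) (f * a) (barH f (q + 1) (bt c z))
        - bt (f * a) (bB ε (q + 1) (barH f (q + 1) (bt c z)))
        - bt (f * a) (barMap (LinearMap.mulLeft k f) (q + 1) (bt c z))
      have h1 : f * a * f = f * a := by rw [mul_assoc, hc, ← mul_assoc, hf]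
      have h2 : f * a * (f * c) = f * (a * c) := by rw [← mul_assoc, h1, mul_assoc]
      have h3 : ∀ w : (barC k A (q + 1) : Type), ∀ v : (barC k A q : Type),
        barH f (q + 1) (bt a v) = bt f (bt a v) - bt (f * a) (barH f q v) :=
          fun _ v => barH_succ f q a v
      have h := congrArg (bt (f * a)) (ih (bt c z) c z rfl)
      simp only [bt_add, bt_sub] at h
      simp only [bB_succ, barH_succ, barAct_succ, barMap_bt, map_sub, map_neg, h1, h2, bt_sub,
        bt_neg, LinearMap.mulLeft_apply, h]
      abel
    exact LinearMap.congr_fun key x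

lemma barH_D (hf : f * f = f) (hc : ∀ a, a * f = f * a) (hε : ε f = 1)
    (q : ℕ) (y : (barC k A (q + 1) : Type)) :
    bD ε (q + 1) (barH f (q + 1) y) + barH f q (bD ε q y)
      = y - barMap (LinearMap.mulLeft k f) (q + 1) y := by
  have key : (bD ε (q + 1)).comp (barH f (q + 1)) + (barH f q).comp (bD ε q)
      = LinearMap.id - barMap (LinearMap.mulLeft k f) (q + 1) := by
    apply bC_ext
    intro a x
    have h := barH_B ε f hf hc hε q _ a x rfl
    have h1 : ε (f * a) = ε a := by rw [map_mul, hε, one_mul]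
    simp only [LinearMap.add_apply, LinearMap.sub_apply, LinearMap.comp_apply, LinearMap.id_apply,
      barH_succ, map_sub, map_add, map_smul, bD_apply, h, bB_succ, barMap_bt, hε, h1, one_smul,
      barAct_succ, LinearMap.mulLeft_apply]
    abel
  exact LinearMap.congr_fun key y

lemma barH_cyc (hf : f * f = f) (hc : ∀ a, a * f = f * a) (hε : ε f = 1)
    (q : ℕ) (x : (barC k A q : Type)) (hx : x ∈ barCycles k A ε q) :
    x - barMap (LinearMap.mulLeft k f) q x ∈ LinearMap.range (bD ε q) := by
  cases q with
  | zero =>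
    have h2 : barMap (LinearMap.mulLeft k f) 0 x = x := rfl
    rw [h2, sub_self]
    exact Submodule.zero_mem _
  | succ q =>
    change bD ε q x = 0 at hx
    refine ⟨barH f (q + 1) x, ?_⟩
    rw [← barH_D ε f hf hc hε, hx, map_zero, add_zero]

end homotopy

lemma barMap_comp {B C : Type} [Ring B] [Algebra k B] [Ring C] [Algebra k C]
    (φ : A →ₗ[k] B) (ψ : B →ₗ[k] C) (q : ℕ) (x : (barC k A q : Type)) :
    barMap ψ q (barMap φ q x) = barMap (ψ.comp φ) q x := by
  induction q with
  | zero => rfl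
  | succ q ih =>
    have : (barMap ψ (q + 1)).comp (barMap φ (q + 1)) = barMap (ψ.comp φ) (q + 1) := by
      apply bC_ext
      intro a y
      simp only [LinearMap.comp_apply, barMap_bt, ih]
    exact LinearMap.congr_fun this x

lemma barMap_id (q : ℕ) (x : (barC k A q : Type)) :
    barMap (LinearMap.id : A →ₗ[k] A) q x = x := by
  induction q with
  | zero => rfl
  | succ q ih =>
    have : barMap (LinearMap.id : A →ₗ[k] A) (q + 1) = LinearMap.id := by
      apply bC_ext
      intro a y
      simp only [barMap_bt, ih, LinearMap.id_apply]
    exact LinearMap.congr_fun this x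

/-- Splitting off a central idempotent of augmentation one does not change the homology. -/
theorem torEquiv {B : Type} [Ring B] [Algebra k B] (η : B →ₐ[k] k)
    (π : A →ₗ[k] B) (hπ : ∀ a b, π (a * b) = π a * π b) (hπε : ∀ a, η (π a) = ε a)
    (s : B →ₗ[k] A) (hs : ∀ a b, s (a * b) = s a * s b) (hsε : ∀ a, ε (s a) = η a)
    (hπs : π.comp s = LinearMap.id) (f : A) (hsπ : s.comp π = LinearMap.mulLeft k f)
    (hf : f * f = f) (hc : ∀ a, a * f = f * a) (hε : ε f = 1) (q : ℕ) :
    Nonempty (barTor k A ε q ≃ₗ[k] barTor k B η q) := by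
  refine ⟨LinearEquiv.ofLinearMap (torMap ε η π hπ hπε q) (torMap η ε s hs hsε q) ?_ ?_⟩
  · ext x
    obtain ⟨x, rfl⟩ := Submodule.Quotient.mk_surjective _ x
    change Submodule.Quotient.mk _ = Submodule.Quotient.mk _
    congr 1
    apply Subtype.ext
    change barMap π q (barMap s q x.1) = x.1
    rw [barMap_comp, hπs, barMap_id]
  · ext x
    obtain ⟨x, rfl⟩ := Submodule.Quotient.mk_surjective _ x
    change Submodule.Quotient.mk _ = Submodule.Quotient.mk _
    symm
    rw [Submodule.Quotient.eq]
    change x.1 - barMap s q (barMap π q x.1) ∈ LinearMap.range (bD ε q)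
    rw [barMap_comp, hsπ]
    exact barH_cyc ε f hf hc hε q x.1 x.2

end Helpers

section BRHelpers

variable (k : Type) [CommRing k] (n : ℕ) (ε : k)

/-- Image of a generator. -/
def gB (i : Fin (n - 1)) : BRAlg k n ε := RingQuot.mkAlgHom k (BRRel k n ε) (BRb k n i)
/-- Image of a generator. -/
def gBi (i : Fin (n - 1)) : BRAlg k n ε := RingQuot.mkAlgHom k (BRRel k n ε) (BRbi k n i)
/-- Image of a generator. -/
def gP (i : Fin n) : BRAlg k n ε := RingQuot.mkAlgHom k (BRRel k n ε) (BRp k n i)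

variable {k n ε}

lemma gB_gBi (i : Fin (n - 1)) : gB k n ε i * gBi k n ε i = 1 := by
  have := RingQuot.mkAlgHom_rel k (BRRel.b_inv_r (k := k) (ε := ε) i)
  simp only [map_mul, map_one] at this
  exact this
lemma gBi_gB (i : Fin (n - 1)) : gBi k n ε i * gB k n ε i = 1 := by
  have := RingQuot.mkAlgHom_rel k (BRRel.b_inv_l (k := k) (ε := ε) i)
  simp only [map_mul, map_one] at this
  exact this
lemma gB_braid (i j : Fin (n - 1)) (h : (j : ℕ) = (i : ℕ) + 1) :
    gB k n ε i * gB k n ε j * gB k n ε i = gB k n ε j * gB k n ε i * gB k n ε j := by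
  have := RingQuot.mkAlgHom_rel k (BRRel.b_braid (k := k) (ε := ε) i j h)
  simp only [map_mul] at this
  exact this
lemma gB_comm (i j : Fin (n - 1)) (h : (i : ℕ) + 1 < (j : ℕ)) :
    gB k n ε i * gB k n ε j = gB k n ε j * gB k n ε i := by
  have := RingQuot.mkAlgHom_rel k (BRRel.bb_comm (k := k) (ε := ε) i j h)
  simp only [map_mul] at this
  exact this
lemma gP_sq (j : Fin n) : gP k n ε j * gP k n ε j = ε • gP k n ε j := by
  have := RingQuot.mkAlgHom_rel k (BRRel.p_sq (k := k) (ε := ε) j)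
  simp only [map_mul, map_smul] at this
  exact this
lemma gP_comm_lt (j l : Fin n) (h : (j : ℕ) < (l : ℕ)) :
    gP k n ε j * gP k n ε l = gP k n ε l * gP k n ε j := by
  have := RingQuot.mkAlgHom_rel k (BRRel.pp_comm (k := k) (ε := ε) j l h)
  simp only [map_mul] at this
  exact this
lemma gP_comm (j l : Fin n) : gP k n ε j * gP k n ε l = gP k n ε l * gP k n ε j := by
  rcases lt_trichotomy (j : ℕ) (l : ℕ) with h | h | h
  · exact gP_comm_lt j l h
  · rw [Fin.ext h]
  · exact (gP_comm_lt l j h).symm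

lemma gBP_comm (i : Fin (n - 1)) (l : Fin n) (h : (l : ℕ) ≠ (i : ℕ) ∧ (l : ℕ) ≠ (i : ℕ) + 1) :
    gB k n ε i * gP k n ε l = gP k n ε l * gB k n ε i := by
  have := RingQuot.mkAlgHom_rel k (BRRel.bp_comm (k := k) (ε := ε) i l h)
  simp only [map_mul] at this
  exact this
lemma gBP_slide (i : Fin (n - 1)) (j j' : Fin n) (h : (j : ℕ) = (i : ℕ))
    (h' : (j' : ℕ) = (i : ℕ) + 1) :
    gB k n ε i * gP k n ε j = gP k n ε j' * gB k n ε i := by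
  have := RingQuot.mkAlgHom_rel k (BRRel.bp_slide (k := k) (ε := ε) i j j' h h')
  simp only [map_mul] at this
  exact this
lemma gBP_slide' (i : Fin (n - 1)) (j j' : Fin n) (h : (j : ℕ) = (i : ℕ))
    (h' : (j' : ℕ) = (i : ℕ) + 1) :
    gB k n ε i * gP k n ε j' = gP k n ε j * gB k n ε i := by
  have := RingQuot.mkAlgHom_rel k (BRRel.bp_slide' (k := k) (ε := ε) i j j' h h')
  simp only [map_mul] at this
  exact this

lemma gBP_ex (i : Fin (n - 1)) (j : Fin n) : ∃ j' : Fin n,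
    gB k n ε i * gP k n ε j = gP k n ε j' * gB k n ε i ∧
    gB k n ε i * gP k n ε j' = gP k n ε j * gB k n ε i := by
  have hi := i.2
  by_cases h1 : (j : ℕ) = i
  · exact ⟨⟨i + 1, by omega⟩, gBP_slide i j _ h1 rfl, gBP_slide' i j _ h1 rfl⟩
  by_cases h2 : (j : ℕ) = i + 1
  · exact ⟨⟨i, by omega⟩, gBP_slide' i _ j rfl h2, gBP_slide i _ j rfl h2⟩
  exact ⟨j, gBP_comm i j ⟨h1, h2⟩, gBP_comm i j ⟨h1, h2⟩⟩

lemma BR_induction {C : BRAlg k n ε → Prop} (hs : ∀ r : k, C (algebraMap k _ r))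
    (hb : ∀ i, C (gB k n ε i)) (hbi : ∀ i, C (gBi k n ε i)) (hp : ∀ i, C (gP k n ε i))
    (hm : ∀ a b, C a → C b → C (a * b)) (ha : ∀ a b, C a → C b → C (a + b)) (a) : C a := by
  obtain ⟨a, rfl⟩ := RingQuot.mkAlgHom_surjective k (BRRel k n ε) a
  induction a using FreeAlgebra.induction with
  | grade0 r => rw [AlgHom.commutes]; exact hs r
  | grade1 x => cases x with
    | b i => exact hb i
    | bi i => exact hbi i
    | p i => exact hp i
  | mul a b h1 h2 => rw [map_mul]; exact hm _ _ h1 h2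
  | add a b h1 h2 => rw [map_add]; exact ha _ _ h1 h2

variable (k n ε)

/-- The quotient map to the group algebra. -/
def brPi : BRAlg k n ε →ₐ[k] MonoidAlgebra k (BraidGroup n) :=
  RingQuot.liftAlgHom k ⟨FreeAlgebra.lift k
      (fun x => match x with
        | BRGen.b i => MonoidAlgebra.of k (BraidGroup n) (PresentedGroup.of i)
        | BRGen.bi i => MonoidAlgebra.of k (BraidGroup n) (PresentedGroup.of i)⁻¹
        | BRGen.p _ => 0), by
    have hrel : ∀ x ∈ braidRels (n - 1), PresentedGroup.mk (braidRels (n - 1)) x = 1 :=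
      fun x hx => PresentedGroup.one_of_mem hx
    rintro x y h
    induction h with
    | b_braid i j h =>
      simp only [BRb, map_mul, FreeAlgebra.lift_ι_apply]
      simp only [← map_mul]
      congr 1
      have := hrel _ ⟨i, j, Or.inl ⟨h.symm, rfl⟩⟩
      rw [map_mul, map_inv, mul_inv_eq_one] at this
      simp only [map_mul] at this
      exact this
    | bb_comm i j h =>
      simp only [BRb, map_mul, FreeAlgebra.lift_ι_apply]
      simp only [← map_mul]
      congr 1
      have := hrel _ ⟨i, j, Or.inr ⟨h, rfl⟩⟩
      rw [map_mul, map_inv, mul_inv_eq_one] at this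
      simp only [map_mul] at this
      exact this
    | b_inv_r i =>
      simp only [BRb, BRbi, map_mul, map_one, FreeAlgebra.lift_ι_apply]
      rw [← map_mul, mul_inv_cancel, map_one]
    | b_inv_l i =>
      simp only [BRb, BRbi, map_mul, map_one, FreeAlgebra.lift_ι_apply]
      rw [← map_mul, inv_mul_cancel, map_one]
    | _ => simp only [BRb, BRp, map_mul, map_smul, FreeAlgebra.lift_ι_apply, mul_zero, zero_mul,
             smul_zero]⟩

lemma brPi_B (i) : brPi k n ε (gB k n ε i)
    = MonoidAlgebra.of k (BraidGroup n) (PresentedGroup.of i) := by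
  simp [brPi, gB]
lemma brPi_Bi (i) : brPi k n ε (gBi k n ε i)
    = MonoidAlgebra.of k (BraidGroup n) (PresentedGroup.of i)⁻¹ := by
  simp [brPi, gBi]
lemma brPi_P (i) : brPi k n ε (gP k n ε i) = 0 := by
  simp [brPi, gP]

/-- Braid generators as units. -/
def gU (i : Fin (n - 1)) : (BRAlg k n ε)ˣ := ⟨gB k n ε i, gBi k n ε i, gB_gBi i, gBi_gB i⟩

/-- The braid group inside the units. -/
def brUnits : BraidGroup n →* (BRAlg k n ε)ˣ :=
  PresentedGroup.toGroup (f := gU k n ε) (by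
    rintro r ⟨i, j, (⟨hij, rfl⟩ | ⟨hij, rfl⟩)⟩ <;>
      simp only [map_mul, map_inv, FreeGroup.lift_apply_of] <;> rw [mul_inv_eq_one]
    · exact Units.ext (gB_braid i j hij.symm)
    · exact Units.ext (gB_comm i j hij))

/-- The splitting as algebras. -/
def brL : MonoidAlgebra k (BraidGroup n) →ₐ[k] BRAlg k n ε :=
  MonoidAlgebra.lift k _ _ ((Units.coeHom _).comp (brUnits k n ε))

lemma brL_B (i) : brL k n ε (MonoidAlgebra.of k (BraidGroup n) (PresentedGroup.of i))
    = gB k n ε i := by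
  rw [brL, MonoidAlgebra.lift_of, MonoidHom.comp_apply, brUnits, PresentedGroup.toGroup.of]
  rfl
lemma brL_Bi (i) : brL k n ε (MonoidAlgebra.of k (BraidGroup n) (PresentedGroup.of i)⁻¹)
    = gBi k n ε i := by
  rw [brL, MonoidAlgebra.lift_of, MonoidHom.comp_apply, map_inv, brUnits,
    PresentedGroup.toGroup.of]
  rfl

lemma brPi_L : (brPi k n ε).comp (brL k n ε) = AlgHom.id k _ := by
  have key : (((brPi k n ε).comp (brL k n ε) : _ →* _).comp (MonoidAlgebra.of k (BraidGroup n))).toHomUnits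
      = (MonoidAlgebra.of k (BraidGroup n)).toHomUnits := by
    apply PresentedGroup.ext
    intro i
    apply Units.ext
    change brPi k n ε (brL k n ε (MonoidAlgebra.of k (BraidGroup n) (PresentedGroup.of i))) =
      MonoidAlgebra.of k (BraidGroup n) (PresentedGroup.of i)
    rw [brL_B, brPi_B]
  apply (MonoidAlgebra.lift k _ _).symm.injective
  apply MonoidHom.ext
  intro g
  exact congrArg Units.val (DFunLike.congr_fun key g)

lemma aug_pi : (groupAug k (BraidGroup n)).comp (brPi k n ε) = BRaug k n ε := by
  apply RingQuot.ringQuot_ext'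
  apply FreeAlgebra.hom_ext
  funext x
  cases x <;> simp [brPi, BRaug, groupAug]

lemma exists_f (hε : IsUnit ε) (S : Finset (Fin n)) : ∃ f : BRAlg k n ε,
    (∀ j ∈ S, gP k n ε j * f = 0) ∧ (∀ j, gP k n ε j * f = f * gP k n ε j) ∧
    (∀ x, (∀ j, gP k n ε j * x = 0) → f * x = x) ∧
    (∀ x, (∀ j, x * gP k n ε j = 0) → x * f = x) ∧ brPi k n ε f = 1 := by
  obtain ⟨u, rfl⟩ := hε
  induction S using Finset.induction_on with
  | empty => exact ⟨1, by simp, by simp, by simp, by simp, map_one _⟩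
  | insert a S ha ih =>
    obtain ⟨f, h1, h2, h3, h4, h5⟩ := ih
    have hs := gP_sq (k := k) (ε := (u : k)) a
    refine ⟨f * (1 - (↑u⁻¹ : k) • gP k n u a), ?_, ?_, ?_, ?_, ?_⟩
    · intro j hj
      rcases Finset.mem_insert.1 hj with rfl | hj
      · rw [← mul_assoc, h2, mul_assoc, mul_sub, mul_one, mul_smul_comm, hs, smul_smul,
          Units.inv_mul, one_smul, sub_self, mul_zero]
      · rw [← mul_assoc, h1 j hj, zero_mul]
    · intro j
      rw [← mul_assoc, h2, mul_assoc, mul_assoc, mul_sub, sub_mul, mul_smul_comm, smul_mul_assoc,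
        gP_comm, mul_one, one_mul]
    · intro x hx
      rw [mul_assoc, sub_mul, smul_mul_assoc, hx, smul_zero, sub_zero, one_mul, h3 x hx]
    · intro x hx
      rw [← mul_assoc, h4 x hx, mul_sub, mul_smul_comm, hx, smul_zero, sub_zero, mul_one]
    · rw [map_mul, map_sub, map_smul, brPi_P, smul_zero, sub_zero, h5, map_one, one_mul]

lemma exists_f' (hε : IsUnit ε) : ∃ f : BRAlg k n ε,
    f * f = f ∧ (∀ a, a * f = f * a) ∧ (∀ j, f * gP k n ε j = 0) ∧ brPi k n ε f = 1 := by
  obtain ⟨f, h1, h2, h3, h4, h5⟩ := exists_f k n ε hε Finset.univ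
  have h1 : ∀ j, gP k n ε j * f = 0 := fun j => h1 j (Finset.mem_univ _)
  have h1' : ∀ j, f * gP k n ε j = 0 := fun j => by rw [← h2, h1]
  have hb : ∀ i, gB k n ε i * f = f * gB k n ε i := by
    intro i
    have e1 : f * (gB k n ε i * f) = gB k n ε i * f := h3 _ (fun j => by
      obtain ⟨j', _, hj⟩ := gBP_ex (k := k) (ε := ε) i j
      rw [← mul_assoc, ← hj, mul_assoc, h1, mul_zero])
    have e2 : (f * gB k n ε i) * f = f * gB k n ε i := h4 _ (fun j => by
      obtain ⟨j', hj, _⟩ := gBP_ex (k := k) (ε := ε) i j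
      rw [mul_assoc, hj, ← mul_assoc, h1', zero_mul])
    rw [← e1, ← mul_assoc, e2]
  refine ⟨f, h3 f h1, ?_, h1', h5⟩
  intro a
  induction a using BR_induction with
  | hs r => exact Algebra.commutes r f
  | hb i => exact hb i
  | hbi i =>
    calc gBi k n ε i * f = gBi k n ε i * (f * gB k n ε i) * gBi k n ε i := by
          rw [mul_assoc, mul_assoc, gB_gBi, mul_one]
      _ = f * gBi k n ε i := by rw [← hb, ← mul_assoc, gBi_gB, one_mul]
  | hp j => rw [h1, h1']
  | hm a b ha hb => rw [mul_assoc, hb, ← mul_assoc, ha, mul_assoc]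
  | ha a b ha hb => rw [add_mul, mul_add, ha, hb]

theorem braided_aux (hε : IsUnit ε) (q : ℕ) :
    Nonempty ((barTor k (BRAlg k n ε) (BRaug k n ε) q) ≃ₗ[k]
      (groupTor k (BraidGroup n) q)) := by
  obtain ⟨f, hf, hc, hp, hpi⟩ := exists_f' k n ε hε
  have haug : ∀ a, groupAug k (BraidGroup n) (brPi k n ε a) = BRaug k n ε a :=
    fun a => DFunLike.congr_fun (aug_pi k n ε) a
  have hπL : ∀ b, brPi k n ε (brL k n ε b) = b := fun b => DFunLike.congr_fun (brPi_L k n ε) b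
  have hLπ : ∀ a, f * brL k n ε (brPi k n ε a) = f * a := by
    intro a
    induction a using BR_induction with
    | hs r => rw [AlgHom.commutes, AlgHom.commutes]
    | hb i => rw [brPi_B, brL_B]
    | hbi i => rw [brPi_Bi, brL_Bi]
    | hp j => rw [brPi_P, map_zero, mul_zero, hp]
    | hm a b ha hb =>
      rw [map_mul, map_mul, ← mul_assoc, ha, ← hc, mul_assoc, hb, ← mul_assoc, hc, mul_assoc]
    | ha a b ha hb => rw [map_add, map_add, mul_add, mul_add, ha, hb]
  refine torEquiv (BRaug k n ε) (groupAug k (BraidGroup n)) (brPi k n ε).toLinearMap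
    (fun a b => map_mul (brPi k n ε) a b) haug
    ((LinearMap.mulLeft k f).comp (brL k n ε).toLinearMap) ?_ ?_ ?_ f ?_ hf hc ?_ q
  · intro a b
    change f * brL k n ε (a * b) = f * brL k n ε a * (f * brL k n ε b)
    rw [map_mul, mul_assoc f (brL k n ε a) (f * _), ← mul_assoc (brL k n ε a) f, hc,
      mul_assoc f (brL k n ε a),
      ← mul_assoc f f, hf]
  · intro b
    change BRaug k n ε (f * brL k n ε b) = _
    rw [← haug, map_mul, hpi, one_mul, hπL]
  · refine LinearMap.ext fun b => ?_
    change brPi k n ε (f * brL k n ε b) = b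
    rw [map_mul, hpi, one_mul, hπL]
  · refine LinearMap.ext fun a => ?_
    exact hLπ a
  · rw [← haug, hpi, map_one]

end BRHelpers

/-- **Homology of braided rook algebras** (invertible parameter).
Let `k` be a commutative unital ring, `n` a natural number, and `ε ∈ k` invertible.
Then there is an isomorphism of graded `k`-modules
`Tor_*^{BR_n(ε)}(𝟙,𝟙) ≅ Tor_*^{k[B_n]}(k,k) = H_*(B_n; k)`,
where `B_n` is the braid group on `n` strands and `k` carries the trivial action. -/
theorem braided_rook_homology (k : Type) [CommRing k] (n : ℕ) (ε : k) (hε : IsUnit ε)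
    (q : ℕ) :
    Nonempty ((barTor k (BRAlg k n ε) (BRaug k n ε) q) ≃ₗ[k]
      (groupTor k (BraidGroup n) q)) := by
  exact braided_aux k n ε hε q
end
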